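/- For every complex s with Re(s) > 0 and s ≠ 1, ∫_0^∞ ( (e^{x/2} − 1)/(e^x − 1) ) · x^{s−1} dx = (2^s − 2) Γ(s) ζ(s). -/

import Mathlib

open Complex Real MeasureTheory

/-!
Since `(y - 1) / (y ^ 2 - 1) = 1 / (y + 1)`, the integrand is `x ^ (s - 1) / (exp (x / 2) + 1)`, so
up to rescaling the integral is the Mellin transform of `1 / (exp t + 1)`. For `1 < re s` the
partial fraction identity `1 / (exp t + 1) = 1 / (exp t - 1) - 2 / (exp (2 t) - 1)` and Riemann's
formula `∫ t ^ (s - 1) / (exp t - 1) = Γ(s) ζ(s)` evaluate this transform as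
`(1 - 2 ^ (1 - s)) Γ(s) ζ(s)`.
As `1 / (exp t + 1)` is bounded near `0`, its transform is holomorphic for `0 < re s`, and the
formula extends to this half-plane by analytic continuation.
-/

/- Multiplying by `z - 1` removes the pole of `ζ`, so that the identity theorem applies on `U`
rather than on `U \ {1}`, whose connectedness would need an argument. -/
lemma eqOn_mul_riemannZeta_of_one_lt_re {U : Set ℂ} {f g : ℂ → ℂ} {z₀ : ℂ}
    (hUo : IsOpen U) (hUc : IsPreconnected U) (hz₀ : z₀ ∈ U) (hz₀_re : 1 < z₀.re)
    (hf : DifferentiableOn ℂ f U) (hg : DifferentiableOn ℂ g U)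
    (hfg : ∀ z ∈ U, 1 < z.re → f z = g z * riemannZeta z) :
    Set.EqOn f (fun z ↦ g z * riemannZeta z) (U \ {1}) := by
  have sub_one_mul_zeta {z : ℂ} (hz : z ≠ 1) :
      DirichletCharacter.LFunctionTrivChar₁ 1 z = (z - 1) * riemannZeta z := by
    rw [DirichletCharacter.LFunctionTrivChar₁, Function.update_of_ne hz,
      DirichletCharacter.LFunctionTrivChar, DirichletCharacter.LFunction_modOne_eq]
  have eqOn_cleared : Set.EqOn (fun z ↦ (z - 1) * f z)
      (fun z ↦ g z * DirichletCharacter.LFunctionTrivChar₁ 1 z) U := by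
    refine AnalyticOnNhd.eqOn_of_preconnected_of_eventuallyEq
      (DifferentiableOn.analyticOnNhd (by fun_prop) hUo)
      (DifferentiableOn.analyticOnNhd (hg.mul
        (DirichletCharacter.differentiable_LFunctionTrivChar₁ 1).differentiableOn) hUo)
      hUc hz₀ ?_
    filter_upwards [hUo.mem_nhds hz₀,
      (isOpen_lt continuous_const continuous_re).mem_nhds hz₀_re] with z hzU hz
    have hz1 : z ≠ 1 := by rintro rfl; simp at hz
    rw [hfg z hzU hz, sub_one_mul_zeta hz1]
    ring
  rintro s ⟨hsU, hs1⟩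
  refine mul_left_cancel₀ (sub_ne_zero.mpr hs1) ?_
  calc (s - 1) * f s = g s * ((s - 1) * riemannZeta s) := by
        rw [← sub_one_mul_zeta hs1]; exact eqOn_cleared hsU
    _ = (s - 1) * (g s * riemannZeta s) := by ring

lemma differentiableAt_Gamma_of_re_pos {s : ℂ} (hs : 0 < s.re) :
    DifferentiableAt ℂ Complex.Gamma s := by
  refine differentiableAt_Gamma s fun m hm ↦ ?_
  rw [hm, neg_re, natCast_re, Left.neg_pos_iff] at hs
  exact hs.not_ge m.cast_nonneg

lemma hasSum_exp_neg_add_one_mul {t : ℝ} (ht : 0 < t) :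
    HasSum (fun n : ℕ ↦ Real.exp (-((n : ℝ) + 1) * t)) (Real.exp t - 1)⁻¹ := by
  have hgeom := (hasSum_geometric_of_lt_one (Real.exp_pos (-t)).le
    (Real.exp_lt_one_iff.mpr (neg_lt_zero.mpr ht))).mul_left (Real.exp (-t))
  convert! hgeom using 1
  · ext n
    rw [← Real.exp_nat_mul, ← Real.exp_add]
    ring_nf
  · rw [Real.exp_neg, ← mul_inv, mul_sub, mul_inv_cancel₀ (Real.exp_ne_zero t), mul_one]

lemma mellin_inv_exp_sub_one {s : ℂ} (hs : 1 < s.re) :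
    mellin (fun t ↦ (((Real.exp t - 1)⁻¹ : ℝ) : ℂ)) s = Complex.Gamma s * riemannZeta s := by
  have hsum : Summable fun n : ℕ ↦ ‖(1 : ℂ)‖ / ((n : ℝ) + 1) ^ s.re := by
    simpa using (summable_nat_add_iff 1).mpr (Real.summable_one_div_nat_rpow.mpr hs)
  have hmellin := hasSum_mellin (a := fun _ : ℕ ↦ 1) (p := fun n ↦ (n : ℝ) + 1)
    (F := fun t ↦ (((Real.exp t - 1)⁻¹ : ℝ) : ℂ))
    (fun n ↦ Or.inr n.cast_add_one_pos) (one_pos.trans hs)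
    (fun t ht ↦ by simpa using Complex.hasSum_ofReal.mpr (hasSum_exp_neg_add_one_mul ht)) hsum
  rw [← hmellin.tsum_eq, zeta_eq_tsum_one_div_nat_add_one_cpow hs, ← tsum_mul_left]
  simp [div_eq_mul_inv]

lemma mellinConvergent_inv_exp_sub_one {s : ℂ} (hs : 1 < s.re) :
    MellinConvergent (fun t ↦ (((Real.exp t - 1)⁻¹ : ℝ) : ℂ)) s := by
  have exp_sub_one_pos {t : ℝ} (ht : 0 < t) : 0 < Real.exp t - 1 :=
    sub_pos.mpr (Real.one_lt_exp_iff.mpr ht)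
  have hcont : ContinuousOn (fun t ↦ (((Real.exp t - 1)⁻¹ : ℝ) : ℂ)) (Set.Ioi 0) :=
    continuous_ofReal.comp_continuousOn <|
      ContinuousOn.inv₀ (by fun_prop) fun t ht ↦ (exp_sub_one_pos ht).ne'
  have isBigO_top : (fun t ↦ (((Real.exp t - 1)⁻¹ : ℝ) : ℂ)) =O[Filter.atTop]
      fun t ↦ Real.exp (-1 * t) := by
    refine Asymptotics.IsBigO.of_bound 2 ?_
    filter_upwards [Filter.eventually_ge_atTop 1] with t ht
    have two_le_exp : 2 ≤ Real.exp t := by linarith [Real.add_one_le_exp t]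
    rw [norm_real, norm_of_nonneg (inv_nonneg.mpr (by linarith)), norm_of_nonneg (by positivity),
      neg_one_mul, Real.exp_neg, ← div_eq_mul_inv, inv_le_comm₀ (by linarith) (by positivity),
      inv_div]
    linarith
  have isBigO_zero : (fun t ↦ (((Real.exp t - 1)⁻¹ : ℝ) : ℂ)) =O[nhdsWithin 0 (Set.Ioi 0)]
      fun t ↦ t ^ (-1 : ℝ) := by
    refine Asymptotics.IsBigO.of_bound 1 ?_
    filter_upwards [self_mem_nhdsWithin] with t (ht : 0 < t)
    rw [norm_real, norm_of_nonneg (inv_nonneg.mpr (exp_sub_one_pos ht).le), one_mul,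
      norm_of_nonneg (by positivity), rpow_neg_one]
    exact inv_anti₀ ht (by linarith [Real.add_one_le_exp t])
  exact mellinConvergent_of_isBigO_rpow_exp one_pos
    (hcont.locallyIntegrableOn measurableSet_Ioi) isBigO_top isBigO_zero hs

lemma inv_add_one_eq_inv_sub_one_sub {K : Type*} [Field K] {y : K} (hy : y ^ 2 ≠ 1) :
    (y + 1)⁻¹ = (y - 1)⁻¹ - 2 * (y ^ 2 - 1)⁻¹ := by
  have hfactor : y ^ 2 - 1 = (y + 1) * (y - 1) := by ring
  obtain ⟨hadd, hsub⟩ := mul_ne_zero_iff.mp (hfactor ▸ sub_ne_zero.mpr hy)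
  rw [hfactor]
  field_simp
  ring

lemma mellin_inv_exp_add_one_of_one_lt_re {s : ℂ} (hs : 1 < s.re) :
    mellin (fun t ↦ (((Real.exp t + 1)⁻¹ : ℝ) : ℂ)) s =
      (1 - (2 : ℂ) ^ (1 - s)) * Complex.Gamma s * riemannZeta s := by
  set b : ℝ → ℂ := fun t ↦ (((Real.exp t - 1)⁻¹ : ℝ) : ℂ)
  have hb : MellinConvergent b s := mellinConvergent_inv_exp_sub_one hs
  have hb_two : MellinConvergent (fun t ↦ (2 : ℂ) • b (2 * t)) s :=
    ((MellinConvergent.comp_mul_left two_pos).mpr hb).const_smul 2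
  calc mellin (fun t ↦ (((Real.exp t + 1)⁻¹ : ℝ) : ℂ)) s
      = mellin (fun t ↦ b t - (2 : ℂ) • b (2 * t)) s := by
        refine setIntegral_congr_fun measurableSet_Ioi fun t (ht : 0 < t) ↦ ?_
        have hexp : Real.exp t ^ 2 ≠ 1 := (one_lt_pow₀ (Real.one_lt_exp_iff.mpr ht) two_ne_zero).ne'
        simp only [b, inv_add_one_eq_inv_sub_one_sub hexp, ← Real.exp_nat_mul]
        push_cast
        rfl
    _ = mellin b s - (2 : ℂ) • ((2 : ℝ) : ℂ) ^ (-s) • mellin b s := by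
        rw [(hasMellin_sub hb hb_two).2, mellin_const_smul, mellin_comp_mul_left b s two_pos]
    _ = (1 - (2 : ℂ) ^ (1 - s)) * Complex.Gamma s * riemannZeta s := by
        rw [mellin_inv_exp_sub_one hs, sub_eq_add_neg 1 s, cpow_add _ _ two_ne_zero, cpow_one]
        simp only [smul_eq_mul, ofReal_ofNat]
        ring

lemma differentiableAt_mellin_inv_exp_add_one {s : ℂ} (hs : 0 < s.re) :
    DifferentiableAt ℂ (mellin fun t ↦ (((Real.exp t + 1)⁻¹ : ℝ) : ℂ)) s := by
  have hcont : Continuous fun t ↦ (((Real.exp t + 1)⁻¹ : ℝ) : ℂ) :=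
    continuous_ofReal.comp <| Continuous.inv₀ (by fun_prop) fun t ↦ by positivity
  have hnorm (t : ℝ) : ‖(((Real.exp t + 1)⁻¹ : ℝ) : ℂ)‖ = (Real.exp t + 1)⁻¹ := by
    rw [norm_real, norm_of_nonneg (by positivity)]
  have isBigO_top : (fun t ↦ (((Real.exp t + 1)⁻¹ : ℝ) : ℂ)) =O[Filter.atTop]
      fun t ↦ Real.exp (-1 * t) := by
    refine Asymptotics.isBigO_of_le _ fun t ↦ ?_
    rw [hnorm, norm_of_nonneg (by positivity), neg_one_mul, Real.exp_neg]
    exact inv_anti₀ (Real.exp_pos t) (by linarith)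
  have isBigO_zero : (fun t ↦ (((Real.exp t + 1)⁻¹ : ℝ) : ℂ)) =O[nhdsWithin 0 (Set.Ioi 0)]
      fun t ↦ t ^ (-0 : ℝ) := by
    refine Asymptotics.isBigO_of_le _ fun t ↦ ?_
    rw [hnorm, neg_zero, rpow_zero, norm_one]
    exact inv_le_one_of_one_le₀ (by linarith [Real.exp_pos t])
  exact mellin_differentiableAt_of_isBigO_rpow_exp one_pos
    (hcont.continuousOn.locallyIntegrableOn measurableSet_Ioi) isBigO_top isBigO_zero hs

lemma mellin_inv_exp_add_one {s : ℂ} (hs : 0 < s.re) (hs1 : s ≠ 1) :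
    mellin (fun t ↦ (((Real.exp t + 1)⁻¹ : ℝ) : ℂ)) s =
      (1 - (2 : ℂ) ^ (1 - s)) * Complex.Gamma s * riemannZeta s := by
  refine eqOn_mul_riemannZeta_of_one_lt_re (U := {z | 0 < z.re}) (z₀ := 2)
    (g := fun z ↦ (1 - (2 : ℂ) ^ (1 - z)) * Complex.Gamma z)
    (isOpen_lt continuous_const continuous_re) (convex_halfSpace_re_gt 0).isPreconnected
    (by simp) (by simp)
    (fun z hz ↦ (differentiableAt_mellin_inv_exp_add_one hz).differentiableWithinAt)
    (fun z hz ↦ ?_) (fun z _ hz ↦ mellin_inv_exp_add_one_of_one_lt_re hz) ⟨hs, hs1⟩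
  have hpow : DifferentiableAt ℂ (fun z : ℂ ↦ 1 - (2 : ℂ) ^ (1 - z)) z :=
    (DifferentiableAt.const_cpow (by fun_prop) (Or.inl two_ne_zero)).const_sub 1
  exact (hpow.mul (differentiableAt_Gamma_of_re_pos hz)).differentiableWithinAt

lemma exp_half_sub_one_div_exp_sub_one {x : ℝ} (hx : x ≠ 0) :
    (Real.exp (x / 2) - 1) / (Real.exp x - 1) = (Real.exp (1 / 2 * x) + 1)⁻¹ := by
  have hsub : Real.exp (x / 2) - 1 ≠ 0 := by simpa [sub_eq_zero] using hx
  have hsq : Real.exp x = Real.exp (x / 2) ^ 2 := by rw [← Real.exp_nat_mul]; ring_nf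
  have hfactor : Real.exp x - 1 = (Real.exp (x / 2) + 1) * (Real.exp (x / 2) - 1) := by
    rw [hsq]; ring
  rw [hfactor, div_mul_cancel_right₀ hsub, one_div_mul_eq_div]

theorem integral_zeta_half_exp (s : ℂ) (hs : 0 < s.re) (hs1 : s ≠ 1) :
    ∫ x in Set.Ioi (0 : ℝ),
        (((Real.exp (x / 2) - 1) / (Real.exp x - 1) : ℝ) : ℂ) * (x : ℂ) ^ (s - 1) =
      ((2 : ℂ) ^ s - 2) * Complex.Gamma s * riemannZeta s := by
  have hpow : ((1 / 2 : ℝ) : ℂ) ^ (-s) = 2 ^ s := by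
    rw [one_div, ofReal_inv, ofReal_ofNat, inv_cpow _ _ (by simp [pi_ne_zero.symm]), cpow_neg,
      inv_inv]
  have htwo : (2 : ℂ) ^ s * 2 ^ (1 - s) = 2 := by
    rw [← cpow_add _ _ two_ne_zero, add_sub_cancel, cpow_one]
  calc _ = mellin (fun x ↦ (((Real.exp (1 / 2 * x) + 1)⁻¹ : ℝ) : ℂ)) s := by
        refine setIntegral_congr_fun measurableSet_Ioi fun x (hx : 0 < x) ↦ ?_
        simp only [exp_half_sub_one_div_exp_sub_one hx.ne', smul_eq_mul, mul_comm]
    _ = 2 ^ s * ((1 - (2 : ℂ) ^ (1 - s)) * Complex.Gamma s * riemannZeta s) := by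
        rw [mellin_comp_mul_left (fun t ↦ (((Real.exp t + 1)⁻¹ : ℝ) : ℂ)) s one_half_pos, hpow,
          mellin_inv_exp_add_one hs hs1, smul_eq_mul]
    _ = (2 ^ s - 2) * Complex.Gamma s * riemannZeta s := by
        linear_combination (-Complex.Gamma s * riemannZeta s) * htwo
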